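/- arXiv:2002.04771 — 2 statements merged into one kernel-verified Lean document; each statement's English description precedes it below -/
import Mathlib

section
/- For every subset F of U and every copy C for G with F ∩ C = ∅ there exists a copy C' with C ⊆ C' and F ∩ C' = ∅ which is maximal with respect to inclusion among the copies disjoint from F. -/
/-- `f` is adherent to the subgroup `G` of permutations of `U`:
for every finite set `F` there is `g ∈ G` agreeing with `f` on `F`. -/
def IsAdherent {U : Type*} (G : Subgroup (Equiv.Perm U)) (f : U → U) : Prop :=
  ∀ F : Finset U, ∃ g ∈ G, ∀ x ∈ F, f x = g x

/-- `C` is a copy for the group `G`: the range of a function adherent to `G`. -/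
def IsCopy {U : Type*} (G : Subgroup (Equiv.Perm U)) (C : Set U) : Prop :=
  ∃ f : U → U, IsAdherent G f ∧ Set.range f = C

/-!
Copies are characterized by a one-point extension property of finite type: if `g ∈ G` maps a finite
set `A` into `C`, then `g` can be corrected off `A` to an element of `G` that also maps a given
point `x` into `C`. A copy `f[U]` has this property because `f` agrees on finite sets with elements
of `G`. Conversely, a generic ideal of finite partial maps into `C` induced by `G` glues to an
adherent function with range `C`; countability of `U` is what makes a generic ideal available.
Having finite type, the property survives directed unions, and Zorn's lemma applies.
-/

open Set Order

section Extension

variable {U : Type*} {G : Subgroup (Equiv.Perm U)} {C : Set U}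

/-- The one-point extension property of `C` relative to `G`: a finite partial map into `C` induced
by an element of `G` extends to any further point as such a map. It characterizes the copies for `G`
among the subsets of a countable set. -/
def ExtensionProperty (G : Subgroup (Equiv.Perm U)) (C : Set U) : Prop :=
  ∀ g ∈ G, ∀ A : Finset U, MapsTo g A C → ∀ x, ∃ g' ∈ G, EqOn g' g A ∧ g' x ∈ C

theorem IsCopy.extensionProperty (hC : IsCopy G C) : ExtensionProperty G C := by
  classical
  obtain ⟨f, hf, rfl⟩ := hC
  intro g hg A hA x
  have hpre : ∀ a ∈ A, ∃ b, f b = g a := hA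
  choose! b hb using hpre
  obtain ⟨h, hh, hfh⟩ := hf (A.image b)
  obtain ⟨k, hk, hfk⟩ := hf (insert (h⁻¹ (g x)) (A.image b))
  -- `h⁻¹ * g` maps `A` into the set on which `k` agrees with `f` and sends `x` to a point of it.
  refine ⟨k * h⁻¹ * g, mul_mem (mul_mem hk (inv_mem hh)) hg, fun a ha => ?_,
    h⁻¹ (g x), hfk _ (Finset.mem_insert_self _ _)⟩
  have hba : b a ∈ A.image b := Finset.mem_image_of_mem b ha
  have hinv : h⁻¹ (g a) = b a := by
    rw [Equiv.Perm.inv_eq_iff_eq, ← hfh _ hba, hb a ha]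
  calc k (h⁻¹ (g a)) = k (b a) := by rw [hinv]
    _ = f (b a) := (hfk _ (Finset.mem_insert_of_mem hba)).symm
    _ = g a := hb a ha

theorem ExtensionProperty.sUnion {c : Set (Set U)} (hne : c.Nonempty)
    (hdir : DirectedOn (· ⊆ ·) c) (hc : ∀ D ∈ c, ExtensionProperty G D) :
    ExtensionProperty G (⋃₀ c) := by
  intro g hg A hA x
  obtain ⟨D, hDc, hAD⟩ := hdir.exists_mem_subset_of_finite_of_subset_sUnion hne
    (A.finite_toSet.image g) hA.image_subset
  obtain ⟨g', hg', hEq, hx⟩ := hc D hDc g hg A (mapsTo_iff_image_subset.2 hAD) x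
  exact ⟨g', hg', hEq, D, hDc, hx⟩

/-- A finite approximation to an adherent function with values in `C`: the restriction of an element
of `G` to a finite set that it maps into `C`. The permutation is part of the data, so distinct
approximations may have the same restriction and the extension order below is only a preorder. -/
structure FiniteApprox (G : Subgroup (Equiv.Perm U)) (C : Set U) where
  /-- A permutation inducing the partial map. -/
  perm : Equiv.Perm U
  /-- The domain of the partial map. -/
  dom : Finset U
  perm_mem : perm ∈ G
  mapsTo : MapsTo perm dom C

namespace FiniteApprox

instance : Preorder (FiniteApprox G C) where
  le p q := p.dom ⊆ q.dom ∧ EqOn q.perm p.perm p.dom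
  le_refl p := ⟨Subset.rfl, eqOn_refl _ _⟩
  le_trans _ _ _ hpq hqr :=
    ⟨hpq.1.trans hqr.1, (hqr.2.mono (Finset.coe_subset.2 hpq.1)).trans hpq.2⟩

instance : Inhabited (FiniteApprox G C) where
  default := ⟨1, ∅, one_mem G, by simp [MapsTo]⟩

theorem exists_ge_mem_dom (hC : ExtensionProperty G C) (p : FiniteApprox G C) (x : U) :
    ∃ q, p ≤ q ∧ x ∈ q.dom := by
  classical
  obtain ⟨g, hg, hEq, hx⟩ := hC p.perm p.perm_mem p.dom p.mapsTo x
  refine ⟨⟨g, insert x p.dom, hg, ?_⟩, ⟨Finset.subset_insert _ _, hEq⟩, Finset.mem_insert_self _ _⟩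
  rw [Finset.coe_insert]
  exact forall_mem_insert.2 ⟨hx, p.mapsTo.congr hEq.symm⟩

theorem exists_ge_mem_image (p : FiniteApprox G C) {y : U} (hy : y ∈ C) :
    ∃ q, p ≤ q ∧ y ∈ q.perm '' q.dom := by
  classical
  refine ⟨⟨p.perm, insert (p.perm⁻¹ y) p.dom, p.perm_mem, ?_⟩,
    ⟨Finset.subset_insert _ _, eqOn_refl _ _⟩, p.perm⁻¹ y, by simp, by simp⟩
  rw [Finset.coe_insert]
  exact forall_mem_insert.2 ⟨by simpa using hy, p.mapsTo⟩

/-- The approximations defined at `x`, a cofinal set by the extension property; an ideal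
meeting it for every `x` glues to a total function. -/
def definedAt (hC : ExtensionProperty G C) (x : U) : Cofinal (FiniteApprox G C) where
  carrier := {p | x ∈ p.dom}
  isCofinal p := (p.exists_ge_mem_dom hC x).imp fun _ => And.symm

/-- The approximations attaining the value `y`, a cofinal set when `y ∈ C`; an ideal meeting it for
every `y ∈ C` glues to a function onto `C`. -/
def attaining (y : C) : Cofinal (FiniteApprox G C) where
  carrier := {p | (y : U) ∈ p.perm '' p.dom}
  isCofinal p := (p.exists_ge_mem_image y.2).imp fun _ => And.symm

theorem exists_eqOn_of_directedOn {I : Set (FiniteApprox G C)} (hI : DirectedOn (· ≤ ·) I)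
    (hdom : ∀ x, ∃ p ∈ I, x ∈ p.dom) : ∃ f : U → U, ∀ p ∈ I, EqOn f p.perm p.dom := by
  choose p hpI hp using hdom
  refine ⟨fun x => (p x).perm x, fun q hq x hx => ?_⟩
  obtain ⟨r, -, hpr, hqr⟩ := hI (p x) (hpI x) q hq
  exact (hpr.2 (hp x)).symm.trans (hqr.2 hx)

theorem exists_subset_dom_of_directedOn {I : Set (FiniteApprox G C)} (hne : I.Nonempty)
    (hI : DirectedOn (· ≤ ·) I) (hdom : ∀ x, ∃ p ∈ I, x ∈ p.dom) (A : Finset U) :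
    ∃ p ∈ I, A ⊆ p.dom := by
  have hdir : DirectedOn (fun p q : FiniteApprox G C => (p.dom : Set U) ⊆ q.dom) I :=
    hI.mono fun _ _ h => Finset.coe_subset.2 h.1
  simpa only [Finset.coe_subset] using
    hdir.exists_mem_subset_of_finset_subset_biUnion hne fun x _ => by simpa using hdom x

theorem isCopy_of_directedOn {I : Set (FiniteApprox G C)} (hne : I.Nonempty)
    (hI : DirectedOn (· ≤ ·) I) (hdom : ∀ x, ∃ p ∈ I, x ∈ p.dom)
    (hran : ∀ y ∈ C, ∃ p ∈ I, y ∈ p.perm '' p.dom) : IsCopy G C := by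
  obtain ⟨f, hf⟩ := exists_eqOn_of_directedOn hI hdom
  refine ⟨f, fun A => ?_, Subset.antisymm ?_ fun y hy => ?_⟩
  · obtain ⟨p, hpI, hAp⟩ := exists_subset_dom_of_directedOn hne hI hdom A
    exact ⟨p.perm, p.perm_mem, fun x hx => hf p hpI (hAp hx)⟩
  · rintro _ ⟨x, rfl⟩
    obtain ⟨p, hpI, hx⟩ := hdom x
    exact hf p hpI hx ▸ p.mapsTo hx
  · obtain ⟨p, hpI, x, hx, hxy⟩ := hran y hy
    exact ⟨x, (hf p hpI hx).trans hxy⟩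

end FiniteApprox

theorem ExtensionProperty.isCopy [Countable U] (hC : ExtensionProperty G C) : IsCopy G C := by
  have : Encodable (U ⊕ C) := Encodable.ofCountable _
  let 𝒟 : U ⊕ C → Cofinal (FiniteApprox G C) :=
    Sum.elim (FiniteApprox.definedAt hC) FiniteApprox.attaining
  let I : Ideal (FiniteApprox G C) := idealOfCofinals default 𝒟
  have meets (i : U ⊕ C) : ∃ p ∈ 𝒟 i, p ∈ I := cofinal_meets_idealOfCofinals default 𝒟 i
  exact FiniteApprox.isCopy_of_directedOn I.nonempty I.directed
    (fun x => (meets (.inl x)).imp fun _ => And.symm)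
    fun y hy => (meets (.inr ⟨y, hy⟩)).imp fun _ => And.symm

theorem IsCopy.sUnion [Countable U] {c : Set (Set U)} (hne : c.Nonempty)
    (hdir : DirectedOn (· ⊆ ·) c) (hc : ∀ D ∈ c, IsCopy G D) : IsCopy G (⋃₀ c) :=
  (ExtensionProperty.sUnion hne hdir fun D hD => (hc D hD).extensionProperty).isCopy

end Extension

/-- Theorem: for every set `F` and copy `C` disjoint from `F` there is a copy `C' ⊇ C`
disjoint from `F` which is maximal (under inclusion) among copies disjoint from `F`. -/
theorem exists_maximal_copy_disjoint {U : Type*} [Countable U] [Infinite U]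
    (G : Subgroup (Equiv.Perm U)) (F : Set U) (C : Set U)
    (hC : IsCopy G C) (hFC : F ∩ C = ∅) :
    ∃ C' : Set U, IsCopy G C' ∧ C ⊆ C' ∧ F ∩ C' = ∅ ∧
      ∀ D : Set U, IsCopy G D → F ∩ D = ∅ → C' ⊆ D → D = C' := by
  have chain_bound : ∀ c ⊆ {D | IsCopy G D ∧ F ∩ D = ∅}, IsChain (· ⊆ ·) c → c.Nonempty →
      ∃ B ∈ {D | IsCopy G D ∧ F ∩ D = ∅}, ∀ D ∈ c, D ⊆ B := by
    intro c hc hchain hne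
    have hcopy : IsCopy G (⋃₀ c) := .sUnion hne hchain.directedOn fun D hD => (hc hD).1
    have hdisj : Disjoint F (⋃₀ c) :=
      disjoint_sUnion_right.2 fun D hD => disjoint_iff_inter_eq_empty.2 (hc hD).2
    exact ⟨⋃₀ c, ⟨hcopy, hdisj.inter_eq⟩, fun D hD => subset_sUnion_of_mem hD⟩
  obtain ⟨M, hCM, hM⟩ := zorn_subset_nonempty _ chain_bound C ⟨hC, hFC⟩
  exact ⟨M, hM.prop.1, hCM, hM.prop.2, fun D hD hFD hMD => (hM.eq_of_subset ⟨hD, hFD⟩ hMD).symm⟩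
end

section
/- For every copy V for G with V ≠ U and every finite subset F of V there exists a copy W for G with F ⊆ W and W strictly contained in V. -/
/-! For a copy `V` and a finite `F ⊆ V`, let `f` be adherent with range `V`, and let `g ∈ G` agree
with `f` on preimages of the points of `F`. Then `k = f ∘ g⁻¹` is adherent, still has range `V`, and
fixes `F` pointwise. Adherent functions are injective, so `V ⊂ U` gives `k(V) ⊂ k(U) = V`, and
`k(V)` is a copy containing `k(F) = F`. -/

section

variable {U : Type*} {G : Subgroup (Equiv.Perm U)}

namespace IsAdherent

variable {f f₁ f₂ : U → U}

theorem of_mem {g : Equiv.Perm U} (hg : g ∈ G) : IsAdherent G g :=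
  fun _ => ⟨g, hg, fun _ _ => rfl⟩

theorem comp (hf₁ : IsAdherent G f₁) (hf₂ : IsAdherent G f₂) : IsAdherent G (f₁ ∘ f₂) := by
  classical
  intro E
  obtain ⟨g₂, hg₂, hE⟩ := hf₂ E
  obtain ⟨g₁, hg₁, hfE⟩ := hf₁ (E.image f₂)
  refine ⟨g₁ * g₂, G.mul_mem hg₁ hg₂, fun x hx => ?_⟩
  calc f₁ (f₂ x) = g₁ (f₂ x) := hfE _ (Finset.mem_image_of_mem f₂ hx)
    _ = g₁ (g₂ x) := by rw [hE x hx]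

theorem injective (hf : IsAdherent G f) : Function.Injective f := by
  classical
  intro x y hxy
  obtain ⟨g, -, hg⟩ := hf {x, y}
  have hx : f x = g x := hg x (by simp)
  have hy : f y = g y := hg y (by simp)
  exact g.injective (hx.symm.trans (hxy.trans hy))

end IsAdherent

namespace IsCopy

variable {V : Set U}

theorem image (hV : IsCopy G V) {k : U → U} (hk : IsAdherent G k) : IsCopy G (k '' V) := by
  obtain ⟨f, hf, rfl⟩ := hV
  exact ⟨k ∘ f, hk.comp hf, Set.range_comp k f⟩

theorem exists_isAdherent_range_eq_eqOn_id (hV : IsCopy G V) {F : Finset U} (hF : ↑F ⊆ V) :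
    ∃ k : U → U, IsAdherent G k ∧ Set.range k = V ∧ Set.EqOn k id F := by
  classical
  obtain ⟨f, hf, rfl⟩ := hV
  obtain ⟨E, rfl⟩ : ∃ E : Finset U, E.image f = F := by
    rw [← Set.image_univ, Finset.subset_set_image_iff] at hF
    exact hF.imp fun _ hE => hE.2
  obtain ⟨g, hg, hfg⟩ := hf E
  refine ⟨f ∘ ⇑g⁻¹, hf.comp (.of_mem (G.inv_mem hg)), (g⁻¹).surjective.range_comp f, ?_⟩
  rw [Finset.coe_image]
  rintro _ ⟨x, hx, rfl⟩
  calc f (g⁻¹ (f x)) = f (g⁻¹ (g x)) := by rw [hfg x hx]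
    _ = f x := congrArg f (g.symm_apply_apply x)

end IsCopy

end

theorem exists_strictly_smaller_copy_general {U : Type*}
    (G : Subgroup (Equiv.Perm U)) (V : Set U) (hV : IsCopy G V) (hVne : V ≠ Set.univ)
    (F : Finset U) (hF : ↑F ⊆ V) :
    ∃ W : Set U, IsCopy G W ∧ ↑F ⊆ W ∧ W ⊂ V := by
  obtain ⟨k, hk, hkV, hkF⟩ := hV.exists_isAdherent_range_eq_eqOn_id hF
  refine ⟨k '' V, hV.image hk, ?_, ?_⟩
  · calc (F : Set U) = k '' F := hkF.image_eq_self.symm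
      _ ⊆ k '' V := Set.image_mono hF
  · calc k '' V ⊂ k '' Set.univ := hk.injective.image_strictMono (Set.ssubset_univ_iff.mpr hVne)
      _ = V := by rw [Set.image_univ, hkV]

/-- Theorem: for every copy `V ≠ U` and finite `F ⊆ V` there is a copy `W` with
`F ⊆ W ⊊ V`. -/
theorem exists_strictly_smaller_copy {U : Type*} [Countable U] [Infinite U]
    (G : Subgroup (Equiv.Perm U)) (V : Set U) (hV : IsCopy G V) (hVne : V ≠ Set.univ)
    (F : Finset U) (hF : ↑F ⊆ V) :
    ∃ W : Set U, IsCopy G W ∧ ↑F ⊆ W ∧ W ⊂ V :=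
  exists_strictly_smaller_copy_general G V hV hVne F hF
end
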